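/- Let η be a pattern and m the length of its pattern ring, i.e., the smallest positive integer with Next^m(η) = η. Then for every discrete valuation u : K → ℕ, the m-fold iterate of next satisfies next^m(η,u) = (η, u + 1), where (u+1)(i) = u(i)+1 for every i ∈ K. -/

import Mathlib

open scoped BigOperators

namespace PTApaper

/-! ## Clock valuations -/

/-- A (raw) clock valuation on clocks `x_0, …, x_k`. -/
abbrev Val (k : ℕ) := Fin (k+1) → ℝ

/-- A discrete clock valuation. -/
abbrev DVal (k : ℕ) := Fin (k+1) → ℕ

/-- A clock valuation takes nonnegative values. -/
def IsVal {k : ℕ} (v : Val k) : Prop := ∀ i, 0 ≤ v i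

/-- A valuation is initial if the auxiliary clock `x_0` has value 0. -/
def Initial {k : ℕ} (v : Val k) : Prop := v 0 = 0

/-- The integral part `int(v)` of a valuation. -/
noncomputable def intPart {k : ℕ} (v : Val k) : DVal k := fun i => (⌊v i⌋).toNat

/-- The fractional parts of the relative representation `rel(v)`:
`fract(rel(v))(0) = fract (1 - fract (v 0))` and
`fract(rel(v))(i) = fract (fract (v i) + fract(rel(v))(0))` for `i ∈ K⁺`. -/
noncomputable def relFract {k : ℕ} (v : Val k) : Fin (k+1) → ℝ := fun i =>
  if i = 0 then Int.fract (1 - Int.fract (v 0))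
  else Int.fract (Int.fract (v i) + Int.fract (1 - Int.fract (v 0)))

/-- Synchronous clock progress `v + δ`. -/
def shift {k : ℕ} (v : Val k) (δ : ℝ) : Val k := fun i => v i + δ

/-- Clock reset `v↓_r`. -/
def resetVal {k : ℕ} (r : Finset (Fin (k+1))) (v : Val k) : Val k :=
  fun i => if i ∈ r then 0 else v i

/-! ## Patterns -/

/-- A raw pattern: a finite sequence of subsets of `K⁰ ∪ K¹`, where the index
`(i, false)` stands for `i⁰` and `(i, true)` stands for `i¹`. -/
abbrev PatSeq (k : ℕ) := List (Finset (Fin (k+1) × Bool))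

/-- The well-formedness conditions making `η = p₀,…,p_n` a pattern:
`0 ≤ n < 2(k+1)`, the `p_m` are nonempty and pairwise disjoint, `0⁰ ∈ p₀`,
and `p₀ ∪ … ∪ p_n = K⁰ ∪ K¹`. -/
def IsPattern {k : ℕ} (η : PatSeq k) : Prop :=
  η.length ≤ 2*(k+1) ∧
  (∀ p ∈ η, p.Nonempty) ∧
  η.Pairwise Disjoint ∧
  ((0 : Fin (k+1)), false) ∈ η.getD 0 ∅ ∧
  (∀ x : Fin (k+1) × Bool, ∃ p ∈ η, x ∈ p)

/-- `bval v₀ v₁ b` is `v_b`. -/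
def bval {k : ℕ} (v₀ v₁ : Val k) : Bool → Val k
  | false => v₀
  | true => v₁

/-- The defining ordering condition for "`(v₀,v₁)` has pattern `η = p₀,…,p_n`":
for all positions `m, m'`, copies `b, b'` and clocks `i, i'` with `i^b ∈ p_m` and
`i'^{b'} ∈ p_{m'}`, `fract(rel(v_b))(i) = fract(rel(v_{b'}))(i')` iff `m = m'`, and
`fract(rel(v_b))(i) < fract(rel(v_{b'}))(i')` iff `m < m'`. -/
def HasPatternOrd {k : ℕ} (v₀ v₁ : Val k) (η : PatSeq k) : Prop :=
  ∀ m m' : Fin η.length, ∀ b b' : Bool, ∀ i i' : Fin (k+1),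
    (i, b) ∈ η.get m → (i', b') ∈ η.get m' →
      ((relFract (bval v₀ v₁ b) i = relFract (bval v₀ v₁ b') i' ↔ m = m') ∧
       (relFract (bval v₀ v₁ b) i < relFract (bval v₀ v₁ b') i' ↔ (m : ℕ) < (m' : ℕ)))

/-- `(v₀,v₁)` has pattern `η` (written `[(v₀,v₁)] = η`). -/
def PatternOf {k : ℕ} (v₀ v₁ : Val k) (η : PatSeq k) : Prop :=
  IsPattern η ∧ HasPatternOrd v₀ v₁ η

/-- A pattern is initial if it is the pattern of `(v₀,v₀)` for some initial valuation `v₀`. -/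
def InitialPattern {k : ℕ} (η : PatSeq k) : Prop :=
  ∃ v₀ : Val k, IsVal v₀ ∧ Initial v₀ ∧ PatternOf v₀ v₀ η

/-- The equivalence `(v₀¹,v₁) ≈ (v₀²,v₂)`: same pattern and same integral parts. -/
def PairEquiv {k : ℕ} (va vb vc vd : Val k) : Prop :=
  (∃ η : PatSeq k, PatternOf va vb η ∧ PatternOf vc vd η) ∧
  intPart va = intPart vc ∧ intPart vb = intPart vd

/-! ## now-position, Next, next, reset -/

/-- The index of the now-position, i.e. the position containing `0¹`. -/
def nowIdx {k : ℕ} (η : PatSeq k) : ℕ :=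
  η.findIdx fun p => decide (((0 : Fin (k+1)), true) ∈ p)

/-- A merge-pattern: the now-position is the singleton `{0¹}`. -/
def IsMergePat {k : ℕ} (η : PatSeq k) : Prop :=
  η.getD (nowIdx η) ∅ = ({((0 : Fin (k+1)), true)} : Finset (Fin (k+1) × Bool))

/-- A split-pattern: a pattern that is not a merge-pattern. -/
def IsSplitPat {k : ℕ} (η : PatSeq k) : Prop := ¬ IsMergePat η

/-- The next pattern `Next(η)`. -/
def NextPat {k : ℕ} (η : PatSeq k) : PatSeq k :=
  let i := nowIdx η
  if η.getD i ∅ = ({((0 : Fin (k+1)), true)} : Finset (Fin (k+1) × Bool)) then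
    -- merge case : `p₀, …, p_{i-1} ∪ {0¹}, p_{i+1}, …, p_n`
    η.take (i-1) ++ [η.getD (i-1) ∅ ∪ {((0 : Fin (k+1)), true)}] ++ η.drop (i+1)
  else if i = 0 then
    -- split case with `i = 0` : `p₀ ∖ {0¹}, p₁, …, p_n, {0¹}`
    (η.getD 0 ∅ \ {((0 : Fin (k+1)), true)}) :: (η.drop 1 ++ [{((0 : Fin (k+1)), true)}])
  else
    -- split case with `i > 0` : `p₀, …, p_{i-1}, {0¹}, p_i ∖ {0¹}, p_{i+1}, …, p_n`
    η.take i ++ [{((0 : Fin (k+1)), true)}, η.getD i ∅ \ {((0 : Fin (k+1)), true)}]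
      ++ η.drop (i+1)

/-- The counter update of `next(η,u)`. -/
def nextD {k : ℕ} (η : PatSeq k) (u : DVal k) : DVal k :=
  let i := nowIdx η
  if η.getD i ∅ = ({((0 : Fin (k+1)), true)} : Finset (Fin (k+1) × Bool)) then
    fun j =>
      if j = 0 then (if i = 1 then u 0 + 1 else u 0)
      else (if (j, true) ∈ η.getD (i-1) ∅ then u j + 1 else u j)
  else u

/-- `next(η,u)`. -/
def nextPair {k : ℕ} (η : PatSeq k) (u : DVal k) : PatSeq k × DVal k :=
  (NextPat η, nextD η u)

/-- The pattern part of `reset_r(η,u)`: all indices `j¹`, `j ∈ r`, are moved into the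
now-position, and entries that become empty are deleted. -/
def ResetPat {k : ℕ} (r : Finset (Fin (k+1))) (η : PatSeq k) : PatSeq k :=
  let r1 : Finset (Fin (k+1) × Bool) := r.image (fun j => (j, true))
  let i := nowIdx η
  (η.mapIdx (fun m p => if m = i then p ∪ r1 else p \ r1)).filter (fun p => decide (p ≠ ∅))

/-- The counter update of `reset_r(η,u)`. -/
def resetD {k : ℕ} (r : Finset (Fin (k+1))) (u : DVal k) : DVal k :=
  fun j => if j ∈ r then 0 else u j

/-- `reset_r(η,u)`. -/
def resetPair {k : ℕ} (r : Finset (Fin (k+1))) (η : PatSeq k) (u : DVal k) :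
    PatSeq k × DVal k :=
  (ResetPat r η, resetD r u)

/-! ## Pattern changes -/

/-- `v` has no pattern change for `δ`. -/
def NoChange {k : ℕ} (v₀ v : Val k) (δ : ℝ) : Prop :=
  ∃ η : PatSeq k, PatternOf v₀ v η ∧
    ∀ δ', 0 ≤ δ' → δ' ≤ δ → PatternOf v₀ (shift v δ') η

/-- `v` has one pattern change for `δ`. -/
def OneChange {k : ℕ} (v₀ v : Val k) (δ : ℝ) : Prop :=
  ∃ η η' : PatSeq k, PatternOf v₀ v η ∧ PatternOf v₀ (shift v δ) η' ∧
    NextPat η = η' ∧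
    ((∀ δ', 0 < δ' → δ' < δ → PatternOf v₀ (shift v δ') η) ∨
     (∀ δ', 0 < δ' → δ' < δ → PatternOf v₀ (shift v δ') η'))

/-- `v` has `n` pattern changes for `δ` (for `n ≥ 1`): `δ = δ₁ + … + δ_n` with each
`δ_j > 0` and `v + δ₁ + … + δ_j` has one pattern change for `δ_{j+1}`. -/
def NChanges {k : ℕ} (v₀ v : Val k) (n : ℕ) (δ : ℝ) : Prop :=
  ∃ d : ℕ → ℝ, (∀ j < n, 0 < d j) ∧ (∑ j ∈ Finset.range n, d j) = δ ∧
    ∀ j < n, OneChange v₀ (shift v (∑ j' ∈ Finset.range j, d j')) (d j)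

/-! ## Clock constraints -/

/-- Comparison operators `<, ≤, =, ≥, >`. -/
inductive CCmp | lt | le | eq | ge | gt

/-- Evaluation of a comparison operator on reals. -/
def CCmp.evalR : CCmp → ℝ → ℝ → Prop
  | .lt, a, b => a < b
  | .le, a, b => a ≤ b
  | .eq, a, b => a = b
  | .ge, a, b => a ≥ b
  | .gt, a, b => a > b

/-- Clock constraints over the clocks `x_1, …, x_k` (indexed by `Fin k`, clock
`x_{i+1}` for `i : Fin k`): Boolean combinations of `x_i - x_j # d` and `x_i # d`. -/
inductive CC (k : ℕ)
  | diff (i j : Fin k) (op : CCmp) (d : ℕ) : CC k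
  | single (i : Fin k) (op : CCmp) (d : ℕ) : CC k
  | not (c : CC k) : CC k
  | and (c₁ c₂ : CC k) : CC k

/-- `v ∈ c` : the valuation `v` satisfies the clock constraint `c`. -/
def CC.sat {k : ℕ} (v : Val k) : CC k → Prop
  | .diff i j op d => op.evalR (v i.succ - v j.succ) (d : ℝ)
  | .single i op d => op.evalR (v i.succ) (d : ℝ)
  | .not c => ¬ c.sat v
  | .and c₁ c₂ => c₁.sat v ∧ c₂.sat v

/-- The position (in `η`) of an index `x ∈ K⁰ ∪ K¹`. -/
def posOf {k : ℕ} (η : PatSeq k) (x : Fin (k+1) × Bool) : ℕ :=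
  η.findIdx fun p => decide (x ∈ p)

/-- The truth value, given by pattern `η`, of the fractional ordering
`fract(x_a) > fract(x_b)`. -/
def fracGtP {k : ℕ} (η : PatSeq k) (a b : Fin (k+1)) : Prop :=
  let i := posOf η ((0 : Fin (k+1)), true)
  let m₁ := posOf η (a, true)
  let m₂ := posOf η (b, true)
  (m₁ < i ∧ i ≤ m₂) ∨ (m₂ < m₁ ∧ m₁ < i) ∨ (i ≤ m₂ ∧ m₂ < m₁)

/-- The truth value, given by pattern `η`, of `fract(x_a) = fract(x_b)`. -/
def fracEqP {k : ℕ} (η : PatSeq k) (a b : Fin (k+1)) : Prop :=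
  posOf η (a, true) = posOf η (b, true)

/-- The truth value, given by pattern `η`, of `fract(x_a) = 0`. -/
def fracZeroP {k : ℕ} (η : PatSeq k) (a : Fin (k+1)) : Prop :=
  posOf η (a, true) = posOf η ((0 : Fin (k+1)), true)

/-- `u ∈ c^η` : the discrete valuation `u` satisfies the constraint `c^η`, obtained by
rewriting `c` as `I(c)` over integral parts and fractional orderings and substituting the
truth values of the fractional orderings determined by the pattern `η`. -/
def CC.satP {k : ℕ} (η : PatSeq k) (u : DVal k) : CC k → Prop
  | .diff i j op d =>
      let I : ℤ := (u i.succ : ℤ) - (u j.succ : ℤ)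
      (match op with
      | .lt => I < d ∨ (I = d ∧ fracGtP η j.succ i.succ)
      | .le => I < d ∨ (I = d ∧ (fracGtP η j.succ i.succ ∨ fracEqP η i.succ j.succ))
      | .eq => I = d ∧ fracEqP η i.succ j.succ
      | .ge => I > d ∨ (I = d ∧ (fracGtP η i.succ j.succ ∨ fracEqP η i.succ j.succ))
      | .gt => I > d ∨ (I = d ∧ fracGtP η i.succ j.succ))
  | .single i op d =>
      let I : ℤ := (u i.succ : ℤ)
      (match op with
      | .lt => I < d
      | .le => I < d ∨ (I = d ∧ fracZeroP η i.succ)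
      | .eq => I = d ∧ fracZeroP η i.succ
      | .ge => I ≥ d
      | .gt => I > d ∨ (I = d ∧ ¬ fracZeroP η i.succ))
  | .not c => ¬ c.satP η u
  | .and c₁ c₂ => c₁.satP η u ∧ c₂.satP η u

/-! ## Pushdown timed automata -/

/-- A pushdown timed automaton `⟨S, {x₁,…,x_k}, Inv, R, Γ, PD⟩`:
`Inv` assigns an invariant to each state, `R s s' = (Rc s s', Rr s s')` assigns a reset
condition and a set of clock resets (a subset of `K⁺`) to each edge, and
`PD s s' = (PDa s s', PDw s s')` assigns a stack operation to each edge. -/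
structure PTA (k : ℕ) (S : Type) (Γ : Type) where
  Inv : S → CC k
  Rc : S → S → CC k
  Rr : S → S → Finset (Fin (k+1))
  hRr : ∀ s s', (0 : Fin (k+1)) ∉ Rr s s'
  PDa : S → S → Γ
  PDw : S → S → List Γ

/-- A configuration `(s, v, w)` of a PTA. -/
abbrev Config (k : ℕ) (S Γ : Type) := S × Val k × List Γ

/-- The one-step transition relation `→_A` of a PTA. -/
def Step {k : ℕ} {S Γ : Type} (A : PTA k S Γ) (c₁ c₂ : Config k S Γ) : Prop :=
  -- progress transition
  (c₁.1 = c₂.1 ∧ c₁.2.2 = c₂.2.2 ∧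
    ∃ δ : ℝ, 0 < δ ∧ c₂.2.1 = shift c₁.2.1 δ ∧
      ∀ δ', 0 ≤ δ' → δ' ≤ δ → (A.Inv c₁.1).sat (shift c₁.2.1 δ')) ∨
  -- reset transition
  ((A.Inv c₁.1).sat c₁.2.1 ∧ (A.Rc c₁.1 c₂.1).sat c₁.2.1 ∧
    c₂.2.1 = resetVal (A.Rr c₁.1 c₂.1) c₁.2.1 ∧ (A.Inv c₂.1).sat c₂.2.1 ∧
    ∃ w : List Γ, c₁.2.2 = A.PDa c₁.1 c₂.1 :: w ∧ c₂.2.2 = A.PDw c₁.1 c₂.1 ++ w)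

/-- `→*_A`, the transitive closure of `→_A`. -/
def Reach {k : ℕ} {S Γ : Type} (A : PTA k S Γ) : Config k S Γ → Config k S Γ → Prop :=
  Relation.TransGen (Step A)

/-- `(s₀,u₀,w₀) →*_{A,η} (s₁,u₁,w₁)`. -/
def ReachPat {k : ℕ} {S Γ : Type} (A : PTA k S Γ) (η : PatSeq k)
    (s₀ : S) (u₀ : DVal k) (w₀ : List Γ) (s₁ : S) (u₁ : DVal k) (w₁ : List Γ) : Prop :=
  ∃ v₀ v₁ : Val k, IsVal v₀ ∧ IsVal v₁ ∧ v₀ 0 = 0 ∧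
    intPart v₀ = u₀ ∧ intPart v₁ = u₁ ∧ PatternOf v₀ v₁ η ∧
    Reach A (s₀, v₀, w₀) (s₁, v₁, w₁)

/-! ## The pattern graph -/

/-- A configuration `(s, η, u, w)` of the pattern graph. -/
abbrev GConfig (k : ℕ) (S Γ : Type) := S × PatSeq k × DVal k × List Γ

/-- The one-step transition relation `→_G` of the pattern graph `G` of a PTA `A`,
through progress edges, stay edges and reset edges. -/
def GStep {k : ℕ} {S Γ : Type} (A : PTA k S Γ) (c₁ c₂ : GConfig k S Γ) : Prop :=
  -- progress edge
  (c₁.1 = c₂.1 ∧ c₁.2.2.2 = c₂.2.2.2 ∧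
    nextPair c₁.2.1 c₁.2.2.1 = (c₂.2.1, c₂.2.2.1) ∧
    (A.Inv c₁.1).satP c₁.2.1 c₁.2.2.1 ∧ (A.Inv c₁.1).satP c₂.2.1 c₂.2.2.1) ∨
  -- stay edge
  (c₁ = c₂ ∧ IsMergePat c₁.2.1 ∧ (A.Inv c₁.1).satP c₁.2.1 c₁.2.2.1) ∨
  -- reset edge
  (resetPair (A.Rr c₁.1 c₂.1) c₁.2.1 c₁.2.2.1 = (c₂.2.1, c₂.2.2.1) ∧
    ((A.Rc c₁.1 c₂.1).and (A.Inv c₁.1)).satP c₁.2.1 c₁.2.2.1 ∧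
    (A.Inv c₂.1).satP c₂.2.1 c₂.2.2.1 ∧
    ∃ w : List Γ, c₁.2.2.2 = A.PDa c₁.1 c₂.1 :: w ∧ c₂.2.2.2 = A.PDw c₁.1 c₂.1 ++ w)

/-- `→*_G`, the transitive closure of `→_G`. -/
def GReach {k : ℕ} {S Γ : Type} (A : PTA k S Γ) : GConfig k S Γ → GConfig k S Γ → Prop :=
  Relation.TransGen (GStep A)

end PTApaper
namespace PTApaper

/-!
Removing `0¹` from a pattern leaves a cyclic track of sets around which `Next` moves `0¹` backwards:
a merge puts `0¹` into the set before it and a split takes it out on the other side. One lap thus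
passes every set exactly once, so it increments every counter exactly once. The increments collected
along an orbit form a Birkhoff sum. A lap is a multiple `m * c` of the length `m` of the pattern
ring, so it collects `c` times what `m` steps collect; as this is `1` and counters are natural
numbers, `m` steps increment every counter by `1` as well.
-/

section PeriodicOrbit

open Function

variable {α M : Type*} {f : α → α} {x : α} {m : ℕ}

theorem iterate_skewProduct [AddCommMonoid M] (f : α → α) (g : α → M) (n : ℕ) (x : α) (u : M) :
    (fun p : α × M => (f p.1, p.2 + g p.1))^[n] (x, u) = (f^[n] x, u + birkhoffSum f g n x) := by
  induction n with
  | zero => simp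
  | succ n ih => simp only [iterate_succ_apply', ih, birkhoffSum_succ, add_assoc]

theorem birkhoffSum_mul_of_isPeriodicPt [AddCommMonoid M] (h : IsPeriodicPt f m x) (g : α → M)
    (c : ℕ) : birkhoffSum f g (m * c) x = c • birkhoffSum f g m x := by
  induction c with
  | zero => simp
  | succ c ih => rw [Nat.mul_succ, birkhoffSum_add, (h.mul_const c).eq, ih, succ_nsmul]

theorem birkhoffSum_apply_of_isPeriodicPt [AddCancelCommMonoid M] (h : IsPeriodicPt f m x)
    (g : α → M) : birkhoffSum f g m (f x) = birkhoffSum f g m x := by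
  have hsucc := (birkhoffSum_succ' f g m x).symm.trans (birkhoffSum_succ f g m x)
  rw [h.eq, add_comm] at hsucc
  exact add_right_cancel hsucc

theorem eq_minimalPeriod_of_forall_le (hm : 0 < m) (h : IsPeriodicPt f m x)
    (hmin : ∀ m', 0 < m' → IsPeriodicPt f m' x → m ≤ m') : m = minimalPeriod f x :=
  (hmin _ (h.minimalPeriod_pos hm) (isPeriodicPt_minimalPeriod f x)).antisymm
    (h.minimalPeriod_le hm)

end PeriodicOrbit

section FinsetLists

variable {α : Type*} {x : α} {p : Finset α}

theorem notMem_of_pairwise_disjoint_append_cons {A B : List (Finset α)}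
    (h : (A ++ p :: B).Pairwise Disjoint) (hx : x ∈ p) : ∀ r ∈ A ++ B, x ∉ r := by
  rw [List.pairwise_middle fun hd => hd.symm, List.pairwise_cons] at h
  exact fun r hr => Finset.disjoint_left.1 (h.1 r hr) hx

theorem countP_mem_eq_one_of_pairwise_disjoint [DecidableEq α] {l : List (Finset α)}
    (h : l.Pairwise Disjoint) (hp : p ∈ l) (hx : x ∈ p) : l.countP (x ∈ ·) = 1 := by
  obtain ⟨A, B, rfl⟩ := List.append_of_mem hp
  have hAB : (A ++ B).countP (x ∈ ·) = 0 := List.countP_eq_zero.2 fun r hr => by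
    simpa using notMem_of_pairwise_disjoint_append_cons h hx r hr
  simp only [List.countP_append, List.countP_cons, hx, decide_true, if_true] at hAB ⊢
  omega

theorem insert_ne_singleton [DecidableEq α] (hp : p.Nonempty) (hx : x ∉ p) : insert x p ≠ {x} :=
  fun h => hp.ne_empty <| by rw [← Finset.erase_insert hx, h, Finset.erase_singleton]

end FinsetLists

section Patterns

variable {k : ℕ}

/-- The element `0¹` of `K⁰ ∪ K¹`, which marks the now-position of a pattern. -/
abbrev now : Fin (k + 1) × Bool := (0, true)

/-- The increment that `next(η, ·)` adds to the counters. It does not depend on their values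
(`nextD_eq_add_tick`), so it is read off at the zero valuation. -/
def tick (η : PatSeq k) : DVal k := nextD η 0

theorem nextD_eq_add_tick (η : PatSeq k) (u : DVal k) : nextD η u = u + tick η := by
  by_cases hmerge : η.getD (nowIdx η) ∅ = {now}
  · funext j
    simp only [tick, nextD, hmerge, if_true, Pi.add_apply, Pi.zero_apply]
    split_ifs with hj <;> simp [hj]
  · simp only [tick, nextD, hmerge, if_false, add_zero]

theorem nextPair_iterate (n : ℕ) (η : PatSeq k) (u : DVal k) :
    (fun p : PatSeq k × DVal k => nextPair p.1 p.2)^[n] (η, u) =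
      (NextPat^[n] η, u + birkhoffSum NextPat tick n η) := by
  simp only [nextPair, nextD_eq_add_tick, iterate_skewProduct]

/-- `Run n η w ζ`: `n` steps of `next` lead from the pattern `η` to the pattern `ζ` and add `w` to
the counters. -/
structure Run (n : ℕ) (η : PatSeq k) (w : DVal k) (ζ : PatSeq k) : Prop where
  iterate_eq : NextPat^[n] η = ζ
  birkhoffSum_eq : birkhoffSum NextPat tick n η = w

namespace Run

variable {n n₁ n₂ : ℕ} {η ζ θ : PatSeq k} {v w : DVal k}

theorem refl (η : PatSeq k) : Run 0 η 0 η := ⟨rfl, birkhoffSum_zero _ _ _⟩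

theorem single (hζ : NextPat η = ζ) (hw : tick η = w) : Run 1 η w ζ :=
  ⟨hζ, (birkhoffSum_one _ _ _).trans hw⟩

theorem trans (h₁ : Run n₁ η v ζ) (h₂ : Run n₂ ζ w θ) : Run (n₁ + n₂) η (v + w) θ where
  iterate_eq := by rw [add_comm, Function.iterate_add_apply, h₁.iterate_eq, h₂.iterate_eq]
  birkhoffSum_eq := by
    rw [birkhoffSum_add, h₁.iterate_eq, h₁.birkhoffSum_eq, h₂.birkhoffSum_eq]

theorem isPeriodicPt (h : Run n η w η) : Function.IsPeriodicPt NextPat n η := h.iterate_eq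

theorem next (h : Run n η w η) : Run n (NextPat η) w (NextPat η) where
  iterate_eq := h.isPeriodicPt.apply
  birkhoffSum_eq := (birkhoffSum_apply_of_isPeriodicPt h.isPeriodicPt _).trans h.birkhoffSum_eq

end Run

/-- The increment collected while `0¹` passes the sets in `q`, apart from the one for the counter
of clock `0`, which `next` increments only when `0¹` enters the first set of a pattern. -/
def passIncrement (q : PatSeq k) : DVal k :=
  fun j => if j = 0 then 0 else q.countP ((j, true) ∈ ·)

theorem passIncrement_append (q r : PatSeq k) :
    passIncrement (q ++ r) = passIncrement q + passIncrement r := by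
  funext j
  by_cases hj : j = 0 <;> simp [passIncrement, hj]

section Steps

variable {A : PatSeq k} {p : Finset (Fin (k + 1) × Bool)}

theorem nowIdx_append_cons (hA : ∀ a ∈ A, now ∉ a) (hp : now ∈ p) (B : PatSeq k) :
    nowIdx (A ++ p :: B) = A.length := by
  have hfind : A.findIdx (fun a => decide (now ∈ a)) = A.length :=
    List.findIdx_eq_length.2 fun a ha => by simpa using hA a ha
  simp [nowIdx, List.findIdx_append, List.findIdx_cons, hp, hfind]

theorem run_merge (hA : ∀ a ∈ A, now ∉ a) (hp : now ∉ p) (B : PatSeq k) :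
    Run 1 (A ++ p :: {now} :: B) (passIncrement [p] + if A = [] then Pi.single 0 1 else 0)
      (A ++ insert now p :: B) := by
  have hAp : ∀ a ∈ A ++ [p], now ∉ a := by simpa [or_imp, forall_and] using And.intro hA hp
  have hidx : nowIdx (A ++ p :: {now} :: B) = A.length + 1 := by
    simpa using nowIdx_append_cons hAp (Finset.mem_singleton_self now) B
  refine .single ?_ ?_
  · simp [NextPat, hidx, List.drop_append, Nat.add_assoc]
  · funext j
    simp only [tick, nextD, hidx]
    by_cases hj : j = 0 <;> by_cases hnil : A = [] <;>
      simp [passIncrement, hj, hnil, List.countP_cons]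

theorem tick_split (hA : ∀ a ∈ A, now ∉ a) (hne : p.Nonempty) (hp : now ∉ p) (B : PatSeq k) :
    tick (A ++ insert now p :: B) = 0 := by
  have hidx := nowIdx_append_cons hA (Finset.mem_insert_self now p) B
  simp [tick, nextD, hidx, insert_ne_singleton hne hp]

theorem run_split (hnil : A ≠ []) (hA : ∀ a ∈ A, now ∉ a) (hne : p.Nonempty) (hp : now ∉ p)
    (B : PatSeq k) : Run 1 (A ++ insert now p :: B) 0 (A ++ {now} :: p :: B) := by
  have hidx := nowIdx_append_cons hA (Finset.mem_insert_self now p) B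
  refine .single ?_ (tick_split hA hne hp B)
  simp [NextPat, hidx, insert_ne_singleton hne hp, hnil, hp, Finset.sdiff_singleton_eq_erase]

theorem run_split_wrap (hne : p.Nonempty) (hp : now ∉ p) (B : PatSeq k) :
    Run 1 (insert now p :: B) 0 (p :: B ++ [{now}]) := by
  have hidx : nowIdx (insert now p :: B) = 0 :=
    nowIdx_append_cons (A := []) (by simp) (Finset.mem_insert_self now p) B
  refine .single ?_ (tick_split (A := []) (by simp) hne hp B)
  simp [NextPat, hidx, insert_ne_singleton hne hp, hp, Finset.sdiff_singleton_eq_erase]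

theorem run_pass (hnil : A ≠ []) (hA : ∀ a ∈ A, now ∉ a) (hne : p.Nonempty) (hp : now ∉ p)
    (B : PatSeq k) : Run 2 (A ++ p :: {now} :: B) (passIncrement [p]) (A ++ {now} :: p :: B) := by
  simpa [hnil] using (run_merge hA hp B).trans (run_split hnil hA hne hp B)

theorem run_pass_wrap (hne : p.Nonempty) (hp : now ∉ p) (B : PatSeq k) :
    Run 2 (p :: {now} :: B) (passIncrement [p] + Pi.single 0 1) (p :: B ++ [{now}]) := by
  simpa using (run_merge (A := []) (by simp) hp B).trans (run_split_wrap hne hp B)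

theorem run_sweep {q : PatSeq k} (hnil : A ≠ []) (hA : ∀ a ∈ A, now ∉ a)
    (hne : ∀ p ∈ q, p.Nonempty) (hq : ∀ p ∈ q, now ∉ p) (B : PatSeq k) :
    Run (2 * q.length) (A ++ (q ++ {now} :: B)) (passIncrement q) (A ++ {now} :: (q ++ B)) := by
  induction q using List.reverseRecOn generalizing B with
  | nil =>
    have hzero : passIncrement ([] : PatSeq k) = 0 := by funext j; simp [passIncrement]
    simpa [hzero] using Run.refl (A ++ {now} :: B)
  | append_singleton q p ih =>
    simp only [List.forall_mem_append, List.forall_mem_singleton] at hne hq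
    have hAq : ∀ a ∈ A ++ q, now ∉ a := List.forall_mem_append.2 ⟨hA, hq.1⟩
    have hlast := run_pass (by simp [hnil]) hAq hne.2 hq.2 B
    have hrest := ih hne.1 hq.1 (p :: B)
    rw [passIncrement_append, add_comm (passIncrement q), List.length_append,
      List.length_singleton, mul_add, add_comm (2 * q.length)]
    simpa using Run.trans (by simpa using hlast) hrest

end Steps

/-- `q` is a pattern with `0¹` removed: the sequence of sets around which `0¹` travels. Of the
covering and disjointness conditions only the part on `K¹`, which drives the counters, is kept. -/
structure IsTrack (q : PatSeq k) : Prop where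
  nonempty : ∀ p ∈ q, p.Nonempty
  now_notMem : ∀ p ∈ q, now ∉ p
  countP_eq_one : ∀ j : Fin (k + 1), j ≠ 0 → q.countP ((j, true) ∈ ·) = 1

namespace IsTrack

variable {A B : PatSeq k}

theorem passIncrement_add_single {q : PatSeq k} (hq : IsTrack q) :
    passIncrement q + Pi.single 0 1 = 1 := by
  funext j
  by_cases hj : j = 0
  · simp [passIncrement, hj]
  · simp [passIncrement, hj, hq.countP_eq_one j hj]

theorem run_lap (hq : IsTrack (A ++ B)) (hnil : A ≠ []) :
    Run (2 * (A ++ B).length) (A ++ {now} :: B) 1 (A ++ {now} :: B) := by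
  obtain ⟨p, A, rfl⟩ := List.exists_cons_of_ne_nil hnil
  obtain ⟨hne_pA, hneB⟩ := List.forall_mem_append.1 hq.nonempty
  obtain ⟨hnow_pA, hnowB⟩ := List.forall_mem_append.1 hq.now_notMem
  obtain ⟨hnep, hneA⟩ := List.forall_mem_cons.1 hne_pA
  obtain ⟨hnowp, hnowA⟩ := List.forall_mem_cons.1 hnow_pA
  have sweepA := run_sweep (A := [p]) (by simp) (by simpa using hnowp) hneA hnowA B
  have wrap := run_pass_wrap hnep hnowp (A ++ B)
  have sweepB := run_sweep hnil hnow_pA hneB hnowB []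
  have lap := (sweepA.trans wrap).trans (by simpa using sweepB)
  have steps : 2 * A.length + 2 + 2 * B.length = 2 * (p :: A ++ B).length := by
    simp only [List.length_append, List.length_cons]
    ring
  have gain : passIncrement A + (passIncrement [p] + Pi.single 0 1) + passIncrement B = 1 := by
    rw [← hq.passIncrement_add_single, passIncrement_append, ← List.singleton_append (l := A),
      passIncrement_append]
    abel
  simpa [steps, gain] using lap

end IsTrack

namespace IsPattern

variable {η A B : PatSeq k} {p : Finset (Fin (k + 1) × Bool)}

theorem nonempty (hη : IsPattern η) : ∀ p ∈ η, p.Nonempty := hη.2.1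

theorem pairwise_disjoint (hη : IsPattern η) : η.Pairwise Disjoint := hη.2.2.1

theorem exists_mem (hη : IsPattern η) (x : Fin (k + 1) × Bool) : ∃ p ∈ η, x ∈ p :=
  hη.2.2.2.2 x

theorem countP_mem_eq_one (hη : IsPattern η) (x : Fin (k + 1) × Bool) :
    η.countP (x ∈ ·) = 1 := by
  obtain ⟨p, hp, hx⟩ := hη.exists_mem x
  exact countP_mem_eq_one_of_pairwise_disjoint hη.pairwise_disjoint hp hx

theorem isTrack_of_merge (hη : IsPattern (A ++ {now} :: B)) : IsTrack (A ++ B) where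
  nonempty := by
    have hne := hη.nonempty
    simp only [List.forall_mem_append, List.forall_mem_cons] at hne ⊢
    exact ⟨hne.1, hne.2.2⟩
  now_notMem :=
    notMem_of_pairwise_disjoint_append_cons hη.pairwise_disjoint (Finset.mem_singleton_self now)
  countP_eq_one j hj := by
    simpa [List.countP_append, List.countP_cons, hj] using hη.countP_mem_eq_one (j, true)

theorem isTrack_of_split (hη : IsPattern (A ++ p :: B)) (hp : now ∈ p) (hsplit : p ≠ {now}) :
    IsTrack (A ++ p.erase now :: B) where
  nonempty := by
    have hne := hη.nonempty
    simp only [List.forall_mem_append, List.forall_mem_cons] at hne ⊢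
    refine ⟨hne.1, ?_, hne.2.2⟩
    exact (Finset.erase_nonempty hp).2 ((Finset.nontrivial_iff_ne_singleton hp).2 hsplit)
  now_notMem := by
    have hnow := notMem_of_pairwise_disjoint_append_cons hη.pairwise_disjoint hp
    simp only [List.forall_mem_append, List.forall_mem_cons] at hnow ⊢
    exact ⟨hnow.1, Finset.notMem_erase now p, hnow.2⟩
  countP_eq_one j hj := by
    simpa [List.countP_append, List.countP_cons, hj] using hη.countP_mem_eq_one (j, true)

theorem ne_nil_of_merge (hη : IsPattern (A ++ {now} :: B)) : A ≠ [] := by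
  obtain ⟨-, -, -, hhead, -⟩ := hη
  rintro rfl
  simp at hhead

theorem exists_run_lap (hη : IsPattern η) : ∃ n, Run n η 1 η := by
  obtain ⟨p, hpη, hp⟩ := hη.exists_mem now
  obtain ⟨A, B, rfl⟩ := List.append_of_mem hpη
  rcases eq_or_ne p {now} with rfl | hsplit
  · exact ⟨_, hη.isTrack_of_merge.run_lap hη.ne_nil_of_merge⟩
  · have htrack := hη.isTrack_of_split hp hsplit
    have hmerge : NextPat (A ++ p.erase now :: {now} :: B) = A ++ p :: B := by
      have hA := (List.forall_mem_append.1 htrack.now_notMem).1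
      simpa [Finset.insert_erase hp] using (run_merge hA (Finset.notMem_erase now p) B).iterate_eq
    have lap := IsTrack.run_lap (A := A ++ [p.erase now]) (by simpa using htrack) (by simp)
    simp only [List.append_assoc, List.singleton_append] at lap
    exact ⟨_, hmerge ▸ lap.next⟩

theorem birkhoffSum_tick_minimalPeriod (hη : IsPattern η) :
    birkhoffSum NextPat tick (Function.minimalPeriod NextPat η) η = 1 := by
  obtain ⟨n, lap⟩ := hη.exists_run_lap
  obtain ⟨c, rfl⟩ := lap.isPeriodicPt.minimalPeriod_dvd
  have hsum := lap.birkhoffSum_eq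
  rw [birkhoffSum_mul_of_isPeriodicPt (Function.isPeriodicPt_minimalPeriod _ _)] at hsum
  funext j
  exact Nat.eq_one_of_mul_eq_one_left (congrFun hsum j)

end IsPattern

end Patterns

/-- Let `m` be the length of the pattern ring of `η` (the smallest
positive integer with `Next^m(η) = η`). Then for every discrete valuation `u`,
`next^m(η,u) = (η, u + 1)`. -/
theorem next_iterate_ring (k : ℕ) (hk : 1 ≤ k) (η : PatSeq k) (hη : IsPattern η)
    (m : ℕ) (hm : 0 < m) (hring : NextPat^[m] η = η)
    (hmin : ∀ m' : ℕ, 0 < m' → NextPat^[m'] η = η → m ≤ m')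
    (u : DVal k) :
    (fun p : PatSeq k × DVal k => nextPair p.1 p.2)^[m] (η, u)
      = (η, fun i => u i + 1) := by
  have hm_eq := eq_minimalPeriod_of_forall_le hm hring hmin
  rw [nextPair_iterate, hring, hm_eq, hη.birkhoffSum_tick_minimalPeriod]
  rfl

end PTApaper
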